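/- arXiv:1401.7598 — 2 statements merged into one kernel-verified Lean document; each statement's English description precedes it below -/
import Mathlib

section
/- (Erdős–Nathanson) For every real number α with 0 < α ≤ 1/2, there exists a minimal asymptotic basis A of order 2 whose asymptotic density exists and equals α, i.e., lim_{n→∞} A(n)/n = α. -/
open Pointwise Filter

/-- The counting function of a set of nonnegative integers: the number of
positive elements of `A` that are at most `n`. -/
noncomputable def countingFn (A : Set ℕ) (n : ℕ) : ℕ := (A ∩ Set.Icc 1 n).ncard

/-- The Shnirel'man density `σ(A) = inf_{n ≥ 1} A(n)/n`. -/
noncomputable def shnirelmanDensity (A : Set ℕ) : ℝ :=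
  ⨅ n : {n : ℕ // 0 < n}, (countingFn A (n : ℕ) : ℝ) / ((n : ℕ) : ℝ)

/-- The lower asymptotic density `d_L(A) = liminf_{n → ∞} A(n)/n`. -/
noncomputable def lowerDensity (A : Set ℕ) : ℝ :=
  liminf (fun n : ℕ => (countingFn A n : ℝ) / (n : ℝ)) atTop

/-- `A` is an additive basis of order `h`: every nonnegative integer is the
sum of exactly `h` elements of `A` (with repetitions allowed). -/
def IsBasisOfOrder (A : Set ℕ) (h : ℕ) : Prop :=
  ∀ n : ℕ, ∃ c : Fin h → ℕ, (∀ i, c i ∈ A) ∧ ∑ i, c i = n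

/-- `A` is an asymptotic basis of order `h`: every sufficiently large integer
is the sum of exactly `h` elements of `A` (with repetitions allowed). -/
def IsAsymptoticBasisOfOrder (A : Set ℕ) (h : ℕ) : Prop :=
  ∀ᶠ n : ℕ in atTop, ∃ c : Fin h → ℕ, (∀ i, c i ∈ A) ∧ ∑ i, c i = n

/-- A minimal asymptotic basis of order `h` is an asymptotic basis of order `h`
no proper subset of which is an asymptotic basis of order `h`. -/
def IsMinimalAsymptoticBasisOfOrder (A : Set ℕ) (h : ℕ) : Prop :=
  IsAsymptoticBasisOfOrder A h ∧
    ∀ B : Set ℕ, B ⊂ A → ¬ IsAsymptoticBasisOfOrder B h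

/-- A maximal asymptotic nonbasis of order `h` is a set that is not an
asymptotic basis of order `h`, but such that adjoining any element outside it
produces an asymptotic basis of order `h`. -/
def IsMaximalAsymptoticNonbasisOfOrder (A : Set ℕ) (h : ℕ) : Prop :=
  ¬ IsAsymptoticBasisOfOrder A h ∧
    ∀ b : ℕ, b ∉ A → IsAsymptoticBasisOfOrder (A ∪ {b}) h

namespace MinimalBasis

/-- The lower-half pattern: `F`, modified near `q` so as to contain two blocks around a hole. -/
def lowerPattern (F : Set ℕ) (g q : ℕ) : Set ℕ :=
  {y | (y ∈ F ∧ (y + g < q ∨ q + 2 * g ≤ y)) ∨ (q ≤ y + g ∧ y < q) ∨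
    (q + g ≤ y ∧ y < q + 2 * g)}

/-- The reflected upper-half pattern: the shift of `F` by one, modified near `q` so as to
fill the hole of `lowerPattern F g q`. -/
def upperPattern (F : Set ℕ) (g q : ℕ) : Set ℕ :=
  {y | (y + 1 ∈ F ∧ (y + g < q ∨ q + 2 * g ≤ y)) ∨ (q ≤ y ∧ y < q + g)}

/-- The elements added in the interval from `M + 1` to `2 * M ^ 2 + 1`; the integer
`2 * M ^ 2 + 1` is represented only through `a`. -/
def stage (F : Set ℕ) (g M a : ℕ) : Set ℕ :=
  {y | (M < y ∧ y ≤ M ^ 2 ∧ y ∈ lowerPattern F g (3 * M)) ∨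
    ∃ e, y + e = 2 * M ^ 2 + 1 ∧ e ≤ M ^ 2 ∧ ((M < e ∧ e ∈ upperPattern F g (3 * M)) ∨ e = a)}

/-- The critical integers. -/
def bound (g : ℕ) : ℕ → ℕ
  | 0 => 100 * g
  | k + 1 => 2 * bound g k ^ 2 + 1

open Classical in
/-- The element of `S` protected at step `k`. -/
noncomputable def pivot (S : Set ℕ) (k : ℕ) : ℕ :=
  if (Nat.unpair k).1 ∈ S then (Nat.unpair k).1 else 1

/-- The part of the minimal basis up to `bound g k`. -/
noncomputable def part (F : Set ℕ) (g : ℕ) : ℕ → Set ℕ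
  | 0 => Set.Icc 1 (100 * g)
  | k + 1 => part F g k ∪ stage F g (bound g k) (pivot (part F g k) k)

/-- The minimal basis. -/
def basis (F : Set ℕ) (g : ℕ) : Set ℕ := ⋃ k, part F g k

section Structure

variable {F : Set ℕ} {g : ℕ}

lemma disjoint_patterns (hF : ∀ n ∈ F, n + 1 ∉ F) {q y : ℕ} (h1 : y ∈ lowerPattern F g q)
    (h2 : y ∈ upperPattern F g q) : False := by
  simp only [lowerPattern, upperPattern, Set.mem_ofPred_eq] at h1 h2
  rcases h1 with ⟨h, h'⟩ | h | h <;> rcases h2 with ⟨k, k'⟩ | k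
  · exact hF _ h k
  all_goals omega

lemma exists_mem_lowerPattern (hgap : ∀ n, ∃ f ∈ F, n ≤ f ∧ f < n + g) (q s : ℕ) :
    ∃ b ∈ lowerPattern F g q, s ≤ b ∧ b < s + 3 * g := by
  obtain ⟨f, hf, h1, h2⟩ := hgap s
  simp only [lowerPattern, Set.mem_ofPred_eq]
  by_cases h : q ≤ f ∧ f < q + g
  · exact ⟨q + g, by omega, by omega, by omega⟩
  · refine ⟨f, ?_, h1, by omega⟩
    by_cases h' : f + g < q ∨ q + 2 * g ≤ f
    · exact Or.inl ⟨hf, h'⟩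
    · omega

lemma exists_mem_upperPattern (hgap : ∀ n, ∃ f ∈ F, n ≤ f ∧ f < n + g) (q s : ℕ) :
    ∃ b ∈ upperPattern F g q, s ≤ b ∧ b < s + 3 * g := by
  obtain ⟨f, hf, h1, h2⟩ := hgap (s + 1)
  obtain ⟨f', hf', h1', h2'⟩ := hgap (q + 2 * g + 1)
  obtain ⟨f, rfl⟩ : ∃ e, f = e + 1 := ⟨f - 1, by omega⟩
  obtain ⟨f', rfl⟩ : ∃ e, f' = e + 1 := ⟨f' - 1, by omega⟩
  simp only [upperPattern, Set.mem_ofPred_eq]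
  by_cases h' : f + g < q ∨ q + 2 * g ≤ f
  · exact ⟨f, Or.inl ⟨hf, h'⟩, by omega, by omega⟩
  by_cases h : f < q
  · exact ⟨q, by omega, by omega, by omega⟩
  by_cases h : f < q + g
  · exact ⟨f, by omega, by omega, by omega⟩
  · exact ⟨f', Or.inl ⟨hf', by omega⟩, by omega, by omega⟩

lemma exists_sub_eq (hgap : ∀ n, ∃ f ∈ F, n ≤ f ∧ f < n + g) {q d : ℕ} (hd : 0 < d)
    (hdq : d + g ≤ q) :
    ∃ b ∈ lowerPattern F g q, ∃ e ∈ upperPattern F g q, b + d = e ∧ q ≤ e ∧ e < q + g := by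
  simp only [lowerPattern, upperPattern, Set.mem_ofPred_eq]
  have hg : 0 < g := by obtain ⟨f, -, h⟩ := hgap 0; omega
  by_cases h1 : d ≤ g
  · exact ⟨q - 1, by omega, q + d - 1, by omega, by omega, by omega, by omega⟩
  by_cases h2 : d < 2 * g
  · exact ⟨q + g - 1 - d, by omega, q + g - 1, by omega, by omega, by omega, by omega⟩
  obtain ⟨f, hf, h3, h4⟩ := hgap (q - d)
  exact ⟨f, Or.inl ⟨hf, by omega⟩, f + d, by omega, by omega, by omega, by omega⟩

lemma exists_add_eq (hgap : ∀ n, ∃ f ∈ F, n ≤ f ∧ f < n + g) {q d : ℕ} (hd : 0 < d) :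
    ∃ b ∈ lowerPattern F g q, ∃ e ∈ upperPattern F g q, b = e + d ∧ q ≤ e ∧ e < q + g := by
  simp only [lowerPattern, upperPattern, Set.mem_ofPred_eq]
  have hg : 0 < g := by obtain ⟨f, -, h⟩ := hgap 0; omega
  by_cases h1 : d ≤ g
  · exact ⟨q + g - 1 + d, by omega, q + g - 1, by omega, by omega, by omega, by omega⟩
  by_cases h2 : d < 2 * g
  · exact ⟨q + d, by omega, q, by omega, by omega, by omega, by omega⟩
  obtain ⟨f, hf, h3, h4⟩ := hgap (q + d)
  exact ⟨f, Or.inl ⟨hf, by omega⟩, f - d, by omega, by omega, by omega, by omega⟩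

lemma le_bound (hg : 0 < g) (k : ℕ) : 100 * g ≤ bound g k := by
  induction k with
  | zero => exact le_rfl
  | succ k ih => simp only [bound]; nlinarith

lemma bound_lt_succ (hg : 0 < g) (k : ℕ) : bound g k < bound g (k + 1) := by
  have := le_bound hg k
  simp only [bound]; nlinarith

lemma bound_strictMono (hg : 0 < g) : StrictMono (bound g) :=
  strictMono_nat_of_lt_succ (bound_lt_succ hg)

lemma one_mem_part (hg : 0 < g) (k : ℕ) : 1 ∈ part F g k := by
  induction k with
  | zero => simp only [part, Set.mem_Icc]; omega
  | succ k ih => exact Or.inl ih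

lemma pivot_mem_part (hg : 0 < g) (k : ℕ) : pivot (part F g k) k ∈ part F g k := by
  unfold pivot
  split_ifs with h
  · exact h
  · exact one_mem_part hg k

lemma stage_bounds {M a y : ℕ} (hM : 1 ≤ M) (hy : y ∈ stage F g M a) :
    M < y ∧ y ≤ 2 * M ^ 2 + 1 := by
  rcases hy with ⟨h1, h2, -⟩ | ⟨e, h1, h2, -⟩
  · omega
  · constructor <;> nlinarith

lemma part_bounds (hg : 0 < g) {k y : ℕ} (hy : y ∈ part F g k) : 1 ≤ y ∧ y ≤ bound g k := by
  induction k with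
  | zero => exact hy
  | succ k ih =>
    have := le_bound hg k
    rcases hy with hy | hy
    · have := ih hy
      have := bound_lt_succ hg k
      omega
    · have := stage_bounds (by omega) hy
      simp only [bound]; omega

lemma part_mono : Monotone (part F g) :=
  monotone_nat_of_le_succ fun _ => Set.subset_union_left

lemma mem_part_of_le (hg : 0 < g) {k y : ℕ} (hy : y ∈ basis F g) (hyk : y ≤ bound g k) :
    y ∈ part F g k := by
  obtain ⟨j, hj⟩ := Set.mem_iUnion.1 hy
  induction j with
  | zero => exact part_mono (Nat.zero_le k) hj
  | succ j ih =>
    by_cases hjk : j + 1 ≤ k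
    · exact part_mono hjk hj
    · rcases hj with hj | hj
      · exact ih hj
      · have := le_bound hg j
        have h1 := stage_bounds (by omega) hj
        have := (bound_strictMono hg).monotone (show k ≤ j by omega)
        omega

lemma mem_stage (hg : 0 < g) {k y : ℕ} (hy : y ∈ basis F g) (h1 : bound g k < y)
    (h2 : y ≤ bound g (k + 1)) : y ∈ stage F g (bound g k) (pivot (part F g k) k) := by
  rcases mem_part_of_le hg hy h2 with h | h
  · have := part_bounds hg h
    omega
  · exact h

lemma part_subset (k : ℕ) : part F g k ⊆ basis F g := Set.subset_iUnion _ k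

lemma stage_subset (k : ℕ) :
    stage F g (bound g k) (pivot (part F g k) k) ⊆ basis F g :=
  Set.subset_union_right.trans (part_subset (k + 1))

lemma lower_mem {k y : ℕ} (h1 : bound g k < y) (h2 : y ≤ bound g k ^ 2)
    (h3 : y ∈ lowerPattern F g (3 * bound g k)) : y ∈ basis F g :=
  stage_subset k (Or.inl ⟨h1, h2, h3⟩)

lemma upper_mem {k y e : ℕ} (h : y + e = bound g (k + 1)) (h1 : bound g k < e)
    (h2 : e ≤ bound g k ^ 2)
    (h3 : e ∈ upperPattern F g (3 * bound g k)) : y ∈ basis F g :=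
  stage_subset k (Or.inr ⟨e, h, h2, Or.inl ⟨h1, h3⟩⟩)

lemma eq_pivot_of_add_eq_bound (hg : 0 < g) (hF : ∀ n ∈ F, n + 1 ∉ F) {k x y : ℕ}
    (hx : x ∈ basis F g) (hy : y ∈ basis F g) (h : x + y = bound g (k + 1)) :
    x = pivot (part F g k) k ∨ y = pivot (part F g k) k := by
  wlog hxy : x ≤ y generalizing x y
  · exact (this hy hx (by omega) (by omega)).symm
  left
  have hM := le_bound hg k
  have hN : bound g (k + 1) = 2 * bound g k ^ 2 + 1 := rfl
  have hM2 : bound g k ≤ bound g k ^ 2 := by nlinarith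
  rcases mem_stage hg hy (k := k) (by omega) (by omega) with h' | ⟨e, he, he2, ⟨he3, he4⟩ | he3⟩
  · omega
  · obtain rfl : e = x := by omega
    rcases mem_stage hg hx (k := k) (by omega) (by omega) with h' | ⟨e', h1, h2, -⟩
    · exact (disjoint_patterns hF h'.2.2 he4).elim
    · omega
  · omega

lemma bound_mem_add (hg : 0 < g) (k : ℕ) :
    ∃ x ∈ basis F g, ∃ y ∈ basis F g, x + y = bound g (k + 1) := by
  have hp := pivot_mem_part (F := F) hg k
  have hb := part_bounds hg hp
  have hM := le_bound hg k
  have hN : bound g (k + 1) = 2 * bound g k ^ 2 + 1 := rfl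
  have hM2 : bound g k ≤ bound g k ^ 2 := by nlinarith
  refine ⟨_, part_subset k hp, bound g (k + 1) - pivot (part F g k) k,
    stage_subset k (Or.inr ⟨pivot (part F g k) k, ?_, ?_, Or.inr rfl⟩), ?_⟩ <;> omega

lemma below_bound_mem_add (hg : 0 < g) (hgap : ∀ n, ∃ f ∈ F, n ≤ f ∧ f < n + g) {k d : ℕ}
    (hd : 0 < d) (hd2 : d ≤ bound g k) :
    ∃ x ∈ basis F g, ∃ y ∈ basis F g, x + y + d = bound g (k + 1) := by
  have hM := le_bound hg k
  have hN : bound g (k + 1) = 2 * bound g k ^ 2 + 1 := rfl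
  have hM2 : 100 * bound g k ≤ bound g k ^ 2 := by nlinarith
  obtain ⟨b, hb, e, he, h1, h2, h3⟩ :=
    exists_sub_eq hgap (q := 3 * bound g k) hd (by omega)
  exact ⟨b, lower_mem (by omega) (by omega) hb, bound g (k + 1) - e,
    upper_mem (e := e) (by omega) (by omega) (by omega) he, by omega⟩

lemma above_bound_mem_add (hg : 0 < g) (hgap : ∀ n, ∃ f ∈ F, n ≤ f ∧ f < n + g) {k d : ℕ}
    (hd : 0 < d) (hd2 : d ≤ bound g k) :
    ∃ x ∈ basis F g, ∃ y ∈ basis F g, x + y = bound g (k + 1) + d := by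
  have hM := le_bound hg k
  have hN : bound g (k + 1) = 2 * bound g k ^ 2 + 1 := rfl
  have hM2 : 100 * bound g k ≤ bound g k ^ 2 := by nlinarith
  obtain ⟨b, hb, e, he, h1, h2, h3⟩ :=
    exists_add_eq hgap (q := 3 * bound g k) hd
  exact ⟨b, lower_mem (by omega) (by omega) hb, bound g (k + 1) - e,
    upper_mem (e := e) (by omega) (by omega) (by omega) he, by omega⟩

lemma exists_mem_window (hgap : ∀ n, ∃ f ∈ F, n ≤ f ∧ f < n + g) {k s : ℕ}
    (h1 : bound g k < s) (h2 : s + 6 * g + bound g k < bound g (k + 1)) :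
    ∃ y ∈ basis F g, s ≤ y ∧ y < s + 6 * g := by
  have hN : bound g (k + 1) = 2 * bound g k ^ 2 + 1 := rfl
  by_cases h : s + 3 * g ≤ bound g k ^ 2
  · obtain ⟨b, hb, h3, h4⟩ := exists_mem_lowerPattern hgap (3 * bound g k) s
    exact ⟨b, lower_mem (by omega) (by omega) hb, h3, by omega⟩
  · obtain ⟨b, hb, h3, h4⟩ := exists_mem_upperPattern hgap (3 * bound g k)
      (bound g (k + 1) - (s + 6 * g - 1))
    exact ⟨bound g (k + 1) - b, upper_mem (e := b) (by omega) (by omega) (by omega) hb,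
      by omega, by omega⟩

lemma exists_bound_lt_le (hg : 0 < g) {n : ℕ} (hn : bound g 1 < n) :
    ∃ k, bound g (k + 1) < n ∧ n ≤ bound g (k + 2) := by
  have hex : ∃ j, n ≤ bound g j := ⟨n, (bound_strictMono hg).le_apply⟩
  classical
  have h1 := Nat.find_spec hex
  have h2 : 2 ≤ Nat.find hex := by
    by_contra! h
    have := (bound_strictMono hg).monotone (show Nat.find hex ≤ 1 by omega)
    omega
  obtain ⟨k, hk⟩ := Nat.exists_eq_add_of_le' h2
  refine ⟨k, ?_, hk ▸ h1⟩
  have := Nat.find_min hex (m := k + 1) (by omega)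
  omega

lemma mem_add_of_bound_lt (hg : 0 < g) (hgap : ∀ n, ∃ f ∈ F, n ≤ f ∧ f < n + g) {m : ℕ}
    (hm : bound g 1 < m) : ∃ x ∈ basis F g, ∃ y ∈ basis F g, x + y = m := by
  obtain ⟨k, h1, h2⟩ := exists_bound_lt_le hg hm
  have hM := le_bound hg k
  have hM' := le_bound hg (k + 1)
  by_cases h3 : m ≤ bound g (k + 1) + 8 * g
  · obtain ⟨x, hx, y, hy, h⟩ := above_bound_mem_add hg hgap (k := k)
      (d := m - bound g (k + 1)) (by omega) (by omega)
    exact ⟨x, hx, y, hy, by omega⟩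
  by_cases h4 : m + bound g (k + 1) < bound g (k + 2)
  · obtain ⟨y, hy, h5, h6⟩ := exists_mem_window hgap (k := k + 1) (s := m - 6 * g)
      (by omega) (by show _ < bound g (k + 2); omega)
    refine ⟨y, hy, m - y, part_subset 0 ?_, by omega⟩
    simp only [part, Set.mem_Icc]
    omega
  by_cases h5 : m = bound g (k + 2)
  · rw [h5]
    exact bound_mem_add hg (k + 1)
  · obtain ⟨x, hx, y, hy, h⟩ := below_bound_mem_add hg hgap (k := k + 1)
      (d := bound g (k + 2) - m) (by omega) (by omega)
    exact ⟨x, hx, y, hy, by change _ = bound g (k + 2) at h; omega⟩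

lemma isMinimal_basis (hg : 0 < g) (hF : ∀ n ∈ F, n + 1 ∉ F)
    (hgap : ∀ n, ∃ f ∈ F, n ≤ f ∧ f < n + g) :
    IsMinimalAsymptoticBasisOfOrder (basis F g) 2 := by
  constructor
  · filter_upwards [eventually_gt_atTop (bound g 1)] with m hm
    obtain ⟨x, hx, y, hy, h⟩ := mem_add_of_bound_lt hg hgap hm
    exact ⟨![x, y], by simp [Fin.forall_fin_two, hx, hy], by simp [h]⟩
  · intro B hB hbasis
    obtain ⟨a, ha, haB⟩ := Set.exists_of_ssubset hB
    obtain ⟨n₀, hn₀⟩ := eventually_atTop.1 hbasis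
    set k := Nat.pair a n₀
    have hk1 : a ≤ k := Nat.left_le_pair a n₀
    have hk2 : n₀ ≤ k := Nat.right_le_pair a n₀
    have hid := (bound_strictMono hg).le_apply (x := k)
    have hlt := bound_lt_succ hg k
    have hpiv : pivot (part F g k) k = a := by
      have : (Nat.unpair k).1 = a := by simp [k]
      rw [pivot, this, if_pos (mem_part_of_le hg ha (by omega))]
    obtain ⟨c, hc, hsum⟩ := hn₀ (bound g (k + 1)) (by omega)
    rw [Fin.sum_univ_two] at hsum
    rcases eq_pivot_of_add_eq_bound hg hF (hB.1 (hc 0)) (hB.1 (hc 1)) hsum with h | h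
    · exact haB (hpiv ▸ h ▸ hc 0)
    · exact haB (hpiv ▸ h ▸ hc 1)

end Structure

section Density

/-- The number of elements of `X` in the half-open interval from `a + 1` to `b`. -/
noncomputable def cnt (X : Set ℕ) (a b : ℕ) : ℕ := (X ∩ Set.Ioc a b).ncard

lemma finite_inter_Ioc (X : Set ℕ) (a b : ℕ) : (X ∩ Set.Ioc a b).Finite :=
  (Set.finite_Ioc a b).subset Set.inter_subset_right

lemma cnt_add (X : Set ℕ) {a b c : ℕ} (hab : a ≤ b) (hbc : b ≤ c) :
    cnt X a c = cnt X a b + cnt X b c := by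
  unfold cnt
  rw [← Set.ncard_union_eq _ (finite_inter_Ioc X a b) (finite_inter_Ioc X b c),
    ← Set.inter_union_distrib_left, Set.Ioc_union_Ioc_eq_Ioc hab hbc]
  refine Set.disjoint_left.2 fun x hx hx' => ?_
  have := hx.2.2
  have := hx'.2.1
  omega

lemma cnt_le (X : Set ℕ) (a b : ℕ) : cnt X a b ≤ b - a := by
  refine (Set.ncard_le_ncard Set.inter_subset_right (Set.finite_Ioc a b)).trans ?_
  rw [← Nat.card_Ioc, ← Finset.coe_Ioc, Set.ncard_coe_finset]

lemma cnt_congr {X Y : Set ℕ} {a b : ℕ} (h : ∀ y, a < y → y ≤ b → (y ∈ X ↔ y ∈ Y)) :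
    cnt X a b = cnt Y a b := by
  unfold cnt
  congr 1
  ext y
  simp only [Set.mem_inter_iff, Set.mem_Ioc]
  constructor <;> rintro ⟨h1, h2, h3⟩
  · exact ⟨(h y h2 h3).1 h1, h2, h3⟩
  · exact ⟨(h y h2 h3).2 h1, h2, h3⟩

lemma cnt_le_add_of_subset {X Y : Set ℕ} {p l : ℕ} (h : ∀ y ∈ X, y ∉ Y → p ≤ y ∧ y < p + l)
    (a b : ℕ) : cnt X a b ≤ cnt Y a b + l := by
  unfold cnt
  have hl : (Set.Ico p (p + l)).ncard = l := by
    rw [← Finset.coe_Ico, Set.ncard_coe_finset, Nat.card_Ico]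
    omega
  calc _ ≤ ((Y ∩ Set.Ioc a b) ∪ Set.Ico p (p + l)).ncard :=
        Set.ncard_le_ncard (fun y hy => by
          by_cases hY : y ∈ Y
          · exact Or.inl ⟨hY, hy.2⟩
          · exact Or.inr (h y hy.1 hY))
          ((finite_inter_Ioc Y a b).union (Set.finite_Ico _ _))
    _ ≤ _ := (Set.ncard_union_le _ _).trans (by rw [hl])

lemma cnt_succ (X : Set ℕ) (a : ℕ) [Decidable (a + 1 ∈ X)] :
    cnt X a (a + 1) = if a + 1 ∈ X then 1 else 0 := by
  have : Set.Ioc a (a + 1) = {a + 1} := by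
    ext y
    simp only [Set.mem_Ioc, Set.mem_singleton_iff]
    omega
  unfold cnt
  rw [this]
  split_ifs with h
  · rw [Set.inter_eq_right.2 (Set.singleton_subset_iff.2 h), Set.ncard_singleton]
  · rw [Set.inter_singleton_eq_empty.2 h, Set.ncard_empty]

lemma cnt_reflect {X Y : Set ℕ} {N a b : ℕ} (hb : b < N)
    (h : ∀ y e, a < y → y ≤ b → y + e = N → (y ∈ X ↔ e ∈ Y)) :
    cnt X a b = cnt Y (N - b - 1) (N - a - 1) := by
  unfold cnt
  refine Set.ncard_congr (fun y _ => N - y) ?_ ?_ ?_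
  · rintro y ⟨h1, h2, h3⟩
    exact ⟨(h y (N - y) h2 h3 (by omega)).1 h1, by omega, by omega⟩
  · rintro y z ⟨-, h2, h3⟩ ⟨-, h4, h5⟩ h6
    omega
  · rintro e ⟨h1, h2, h3⟩
    exact ⟨N - e, ⟨(h (N - e) e (by omega) (by omega) (by omega)).2 h1, by omega, by omega⟩,
      by omega⟩

/-- `X` has counting function within `c` of `α * length` on every interval. -/
def HasDiscrepancy (α c : ℝ) (X : Set ℕ) : Prop :=
  ∀ a b : ℕ, a ≤ b → |(cnt X a b : ℝ) - α * ((b : ℝ) - a)| ≤ c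

lemma HasDiscrepancy.perturb {α c : ℝ} {X Y : Set ℕ} {p l : ℕ} (hX : HasDiscrepancy α c X)
    (h : ∀ y, y < p ∨ p + l ≤ y → (y ∈ X ↔ y ∈ Y)) : HasDiscrepancy α (c + l) Y := by
  intro a b hab
  have h1 := abs_le.1 (hX a b hab)
  have h2 : (cnt X a b : ℝ) ≤ cnt Y a b + l := by
    exact_mod_cast cnt_le_add_of_subset (p := p)
      (fun y hy hy' => by by_contra hc; exact hy' ((h y (by omega)).1 hy)) a b
  have h3 : (cnt Y a b : ℝ) ≤ cnt X a b + l := by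
    exact_mod_cast cnt_le_add_of_subset (p := p)
      (fun y hy hy' => by by_contra hc; exact hy' ((h y (by omega)).2 hy)) a b
  rw [abs_le]
  constructor <;> linarith

variable {F : Set ℕ} {g : ℕ} {α c : ℝ}

lemma HasDiscrepancy.lowerPattern (hF : HasDiscrepancy α c F) {q : ℕ} (hq : g ≤ q) :
    HasDiscrepancy α (c + (3 * g : ℕ)) (lowerPattern F g q) := by
  refine hF.perturb (p := q - g) fun y hy => ?_
  simp only [MinimalBasis.lowerPattern, Set.mem_ofPred_eq]
  constructor
  · exact fun h => Or.inl ⟨h, by omega⟩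
  · rintro (h | h | h)
    · exact h.1
    all_goals omega

lemma HasDiscrepancy.upperPattern (hF : HasDiscrepancy α c {n | n + 1 ∈ F}) {q : ℕ}
    (hq : g ≤ q) : HasDiscrepancy α (c + (3 * g : ℕ)) (upperPattern F g q) := by
  refine hF.perturb (p := q - g) fun y hy => ?_
  simp only [MinimalBasis.upperPattern, Set.mem_ofPred_eq]
  constructor
  · exact fun h => Or.inl ⟨h, by omega⟩
  · rintro (h | h)
    · exact h.1
    · omega

lemma cnt_basis_lower (hg : 0 < g) {k a b : ℕ} (ha : bound g k ≤ a) (hb : b ≤ bound g k ^ 2) :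
    cnt (basis F g) a b = cnt (lowerPattern F g (3 * bound g k)) a b := by
  refine cnt_congr fun y h1 h2 => ⟨fun hy => ?_, lower_mem (by omega) (by omega)⟩
  have hN : bound g (k + 1) = 2 * bound g k ^ 2 + 1 := rfl
  rcases mem_stage hg hy (k := k) (by omega) (by omega) with h | ⟨e, h3, h4, -⟩
  · exact h.2.2
  · omega

lemma cnt_basis_upper (hg : 0 < g) {k a b : ℕ} (ha : bound g k ^ 2 ≤ a)
    (hb : b + bound g k < bound g (k + 1)) :
    cnt (basis F g) a b = cnt (upperPattern F g (3 * bound g k)) (bound g (k + 1) - b - 1)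
      (bound g (k + 1) - a - 1) := by
  have hM := le_bound hg k
  have hN : bound g (k + 1) = 2 * bound g k ^ 2 + 1 := rfl
  have hM2 : bound g k ≤ bound g k ^ 2 := by nlinarith
  refine cnt_reflect (by omega) fun y e h1 h2 h3 => ⟨fun hy => ?_, fun he =>
    upper_mem h3 (by omega) (by omega) he⟩
  rcases mem_stage hg hy (k := k) (by omega) (by omega) with h | ⟨e', h4, h5, h6 | h6⟩
  · omega
  · obtain rfl : e = e' := by omega
    exact h6.2
  · have := part_bounds hg (pivot_mem_part (F := F) hg k)
    omega

lemma abs_cnt_sub_le {X : Set ℕ} (h0 : 0 ≤ α) (h1 : α ≤ 1) {a b : ℕ} (hab : a ≤ b) :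
    |(cnt X a b : ℝ) - α * ((b : ℝ) - a)| ≤ (b : ℝ) - a := by
  have h2 : (cnt X a b : ℝ) ≤ (b : ℝ) - a := by
    rw [← Nat.cast_sub hab]
    exact_mod_cast cnt_le X a b
  have h3 : (0 : ℝ) ≤ cnt X a b := Nat.cast_nonneg _
  have h4 : (a : ℝ) ≤ b := by exact_mod_cast hab
  rw [abs_le]
  constructor <;> nlinarith

lemma abs_cnt_sub_le_trans {X : Set ℕ} {u v : ℝ} {a m b : ℕ} (ham : a ≤ m) (hmb : m ≤ b)
    (hu : |(cnt X a m : ℝ) - α * ((m : ℝ) - a)| ≤ u)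
    (hv : |(cnt X m b : ℝ) - α * ((b : ℝ) - m)| ≤ v) :
    |(cnt X a b : ℝ) - α * ((b : ℝ) - a)| ≤ u + v := by
  rw [cnt_add X ham hmb]
  push_cast
  refine le_trans (le_of_eq ?_) ((abs_add_le _ _).trans (add_le_add hu hv))
  congr 1
  ring

lemma abs_cnt_basis_sub_le_of_add_lt (hg : 0 < g) (hc : 0 ≤ c) (hF : HasDiscrepancy α c F)
    (hF' : HasDiscrepancy α c {n | n + 1 ∈ F}) {k n : ℕ} (h1 : bound g k ≤ n)
    (h2 : n + bound g k < bound g (k + 1)) :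
    |(cnt (basis F g) (bound g k) n : ℝ) - α * ((n : ℝ) - bound g k)| ≤
      2 * (c + (3 * g : ℕ)) := by
  have hM := le_bound hg k
  have hN : bound g (k + 1) = 2 * bound g k ^ 2 + 1 := rfl
  have hM2 : bound g k ≤ bound g k ^ 2 := by nlinarith
  have hlow : ∀ b, bound g k ≤ b → b ≤ bound g k ^ 2 →
      |(cnt (basis F g) (bound g k) b : ℝ) - α * ((b : ℝ) - bound g k)| ≤ c + (3 * g : ℕ) := by
    intro b hb1 hb2
    rw [cnt_basis_lower hg le_rfl hb2]
    exact hF.lowerPattern (by omega) _ _ hb1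
  have hg0 : (0 : ℝ) ≤ (3 * g : ℕ) := Nat.cast_nonneg _
  by_cases h3 : n ≤ bound g k ^ 2
  · exact (hlow n h1 h3).trans (by linarith)
  · rw [two_mul]
    refine abs_cnt_sub_le_trans hM2 (by omega) (hlow _ hM2 le_rfl) ?_
    rw [cnt_basis_upper hg le_rfl h2]
    refine le_trans (le_of_eq ?_) (hF'.upperPattern (q := 3 * bound g k) (by omega)
      (bound g (k + 1) - n - 1) (bound g (k + 1) - bound g k ^ 2 - 1) (by omega))
    rw [Nat.sub_sub, Nat.sub_sub, Nat.cast_sub (by omega), Nat.cast_sub (by omega)]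
    push_cast
    congr 2
    ring

lemma abs_cnt_basis_sub_le (hg : 0 < g) (hα0 : 0 ≤ α) (hα1 : α ≤ 1) (hc : 0 ≤ c)
    (hF : HasDiscrepancy α c F)
    (hF' : HasDiscrepancy α c {n | n + 1 ∈ F}) {k n : ℕ} (h1 : bound g k ≤ n)
    (h2 : n ≤ bound g (k + 1)) :
    |(cnt (basis F g) (bound g k) n : ℝ) - α * ((n : ℝ) - bound g k)| ≤
      2 * (c + (3 * g : ℕ)) + (bound g k + 1) := by
  by_cases h3 : n + bound g k < bound g (k + 1)
  · exact (abs_cnt_basis_sub_le_of_add_lt hg hc hF hF' h1 h3).trans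
      (by linarith [(Nat.cast_nonneg _ : (0 : ℝ) ≤ bound g k)])
  · have hM := le_bound hg k
    have hN : bound g (k + 1) = 2 * bound g k ^ 2 + 1 := rfl
    have hM2 : bound g k ≤ bound g k ^ 2 := by nlinarith
    refine abs_cnt_sub_le_trans (m := bound g (k + 1) - bound g k - 1) (by omega) (by omega)
      (abs_cnt_basis_sub_le_of_add_lt hg hc hF hF' (by omega) (by omega)) ?_
    refine (abs_cnt_sub_le hα0 hα1 (by omega)).trans ?_
    have : n ≤ (bound g (k + 1) - bound g k - 1) + (bound g k + 1) := by omega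
    have : (n : ℝ) ≤ (bound g (k + 1) - bound g k - 1 : ℕ) + (bound g k + 1) := by
      exact_mod_cast this
    linarith

lemma abs_countingFn_basis_sub_le (hg : 0 < g) (hα0 : 0 ≤ α) (hα1 : α ≤ 1) (hc : 0 ≤ c)
    (hF : HasDiscrepancy α c F) (hF' : HasDiscrepancy α c {n | n + 1 ∈ F}) {n : ℕ}
    (hn : bound g 1 < n) :
    |(countingFn (basis F g) n : ℝ) - α * n| ≤ 4 * (c + (3 * g : ℕ)) + 2 + 3 * √(n : ℝ) := by
  obtain ⟨k, h1, h2⟩ := exists_bound_lt_le hg hn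
  have hcount : countingFn (basis F g) n = cnt (basis F g) 0 n := rfl
  have hlt := bound_lt_succ hg k
  have hM := le_bound hg k
  have hN : bound g (k + 1) = 2 * bound g k ^ 2 + 1 := rfl
  have hN' : bound g (k + 2) = 2 * bound g (k + 1) ^ 2 + 1 := rfl
  have hM2 : bound g (k + 1) ≤ bound g (k + 1) ^ 2 := by nlinarith
  have hE0 : |(cnt (basis F g) 0 (bound g k) : ℝ) - α * ((bound g k : ℝ) - (0 : ℕ))| ≤
      (bound g k : ℝ) - (0 : ℕ) := abs_cnt_sub_le hα0 hα1 (Nat.zero_le _)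
  have hE1 := abs_cnt_sub_le_trans (Nat.zero_le _) hlt.le hE0
    (abs_cnt_basis_sub_le hg hα0 hα1 hc hF hF' hlt.le le_rfl)
  have hle_sqrt : ∀ b : ℕ, b ^ 2 ≤ n → (b : ℝ) ≤ √(n : ℝ) := fun b hb =>
    Real.le_sqrt_of_sq_le (by exact_mod_cast hb)
  have hs := hle_sqrt (bound g k) (by omega)
  have hs0 := Real.sqrt_nonneg (n : ℝ)
  rw [hcount, show α * (n : ℝ) = α * ((n : ℝ) - (0 : ℕ)) by simp]
  by_cases h3 : n + bound g (k + 1) < bound g (k + 2)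
  · refine (abs_cnt_sub_le_trans (Nat.zero_le _) h1.le hE1
      (abs_cnt_basis_sub_le_of_add_lt hg hc hF hF' h1.le h3)).trans ?_
    push_cast
    linarith
  · have hs' := hle_sqrt (bound g (k + 1)) (by omega)
    have h4 : (bound g k : ℝ) * 2 ≤ bound g (k + 1) := by
      have : bound g k * 2 ≤ bound g (k + 1) := by nlinarith
      exact_mod_cast this
    refine (abs_cnt_sub_le_trans (Nat.zero_le _) h1.le hE1
      (abs_cnt_basis_sub_le hg hα0 hα1 hc hF hF' h1.le h2)).trans ?_
    push_cast
    linarith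

lemma tendsto_countingFn_basis (hg : 0 < g) (hα0 : 0 ≤ α) (hα1 : α ≤ 1) (hc : 0 ≤ c)
    (hF : HasDiscrepancy α c F) (hF' : HasDiscrepancy α c {n | n + 1 ∈ F}) :
    Tendsto (fun n : ℕ => (countingFn (basis F g) n : ℝ) / (n : ℝ)) atTop (nhds α) := by
  rw [tendsto_iff_norm_sub_tendsto_zero]
  set C : ℝ := 4 * (c + (3 * g : ℕ)) + 2
  have hlim : Tendsto (fun n : ℕ => C / (n : ℝ) + 3 / √(n : ℝ)) atTop (nhds 0) := by
    have h1 := tendsto_const_div_atTop_nhds_zero_nat C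
    have h2 : Tendsto (fun n : ℕ => 3 / √(n : ℝ)) atTop (nhds 0) :=
      (Real.tendsto_sqrt_atTop.comp tendsto_natCast_atTop_atTop).const_div_atTop 3
    simpa using h1.add h2
  refine squeeze_zero' (Eventually.of_forall fun _ => norm_nonneg _) ?_ hlim
  filter_upwards [eventually_gt_atTop (bound g 1)] with n hn
  have hn0 : (0 : ℝ) < n := by exact_mod_cast (show 0 < n by omega)
  have h := abs_countingFn_basis_sub_le hg hα0 hα1 hc hF hF' hn
  have hsq : 3 / √(n : ℝ) = 3 * √(n : ℝ) / n := by
    rw [mul_div_assoc, Real.sqrt_div_self, div_eq_mul_inv]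
  rw [hsq, ← add_div, Real.norm_eq_abs, show (countingFn (basis F g) n : ℝ) / n - α =
    ((countingFn (basis F g) n : ℝ) - α * n) / n by field_simp, abs_div, abs_of_pos hn0]
  gcongr

end Density

section Beatty

/-- The positions at which `⌊α * n⌋` jumps. -/
def jumps (α : ℝ) : Set ℕ := {n | ⌊α * n⌋₊ < ⌊α * (n + 1 : ℕ)⌋₊}

lemma succ_notMem_jumps {α : ℝ} (h0 : 0 ≤ α) (h1 : α ≤ 1 / 2) {n : ℕ} (hn : n ∈ jumps α) :
    n + 1 ∉ jumps α := by
  intro hn'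
  simp only [jumps, Set.mem_ofPred_eq] at hn hn'
  have h2 : ⌊α * (n + 1 + 1 : ℕ)⌋₊ ≤ ⌊α * n⌋₊ + 1 := by
    rw [← Nat.floor_add_one (by positivity)]
    apply Nat.floor_le_floor
    push_cast
    linarith
  omega

lemma exists_mem_jumps {α : ℝ} (h0 : 0 < α) {g : ℕ} (hg : 1 ≤ α * g) (n : ℕ) :
    ∃ f ∈ jumps α, n ≤ f ∧ f < n + g := by
  by_contra! h
  have hconst : ∀ i ≤ g, ⌊α * (n + i : ℕ)⌋₊ ≤ ⌊α * n⌋₊ := by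
    intro i
    induction i with
    | zero => intro; exact le_rfl
    | succ i ih =>
      intro hi
      refine le_trans ?_ (ih (by omega))
      by_contra! hlt
      have := h (n + i) hlt (by omega)
      omega
  have h2 := hconst g le_rfl
  have h3 : ⌊α * n⌋₊ + 1 ≤ ⌊α * (n + g : ℕ)⌋₊ := by
    rw [← Nat.floor_add_one (by positivity)]
    apply Nat.floor_le_floor
    push_cast
    linarith
  omega

lemma hasDiscrepancy_jumps {α : ℝ} (h0 : 0 ≤ α) (h1 : α ≤ 1) (s : ℕ) :
    HasDiscrepancy α 1 {n | n + s ∈ jumps α} := by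
  intro a b hab
  have hcnt : cnt {n | n + s ∈ jumps α} a b + ⌊α * (a + 1 + s : ℕ)⌋₊ =
      ⌊α * (b + 1 + s : ℕ)⌋₊ := by
    induction b, hab using Nat.le_induction with
    | base => simp [cnt]
    | succ b hab ih =>
      classical
      rw [cnt_add _ hab (Nat.le_succ b), cnt_succ]
      have hup : ⌊α * (b + 1 + 1 + s : ℕ)⌋₊ ≤ ⌊α * (b + 1 + s : ℕ)⌋₊ + 1 := by
        rw [← Nat.floor_add_one (by positivity)]
        apply Nat.floor_le_floor
        push_cast
        linarith
      have hdown : ⌊α * (b + 1 + s : ℕ)⌋₊ ≤ ⌊α * (b + 1 + 1 + s : ℕ)⌋₊ := by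
        apply Nat.floor_le_floor
        gcongr
        omega
      simp only [jumps, Set.mem_ofPred_eq, show b + 1 + s + 1 = b + 1 + 1 + s by omega] at ih ⊢
      split_ifs <;> omega
  have hcast : (cnt {n | n + s ∈ jumps α} a b : ℝ) + ⌊α * (a + 1 + s : ℕ)⌋₊ =
      ⌊α * (b + 1 + s : ℕ)⌋₊ := by exact_mod_cast hcnt
  have e1 := Nat.floor_le (show 0 ≤ α * (a + 1 + s : ℕ) by positivity)
  have e2 := Nat.lt_floor_add_one (α * (a + 1 + s : ℕ))
  have e3 := Nat.floor_le (show 0 ≤ α * (b + 1 + s : ℕ) by positivity)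
  have e4 := Nat.lt_floor_add_one (α * (b + 1 + s : ℕ))
  generalize (⌊α * (a + 1 + s : ℕ)⌋₊ : ℝ) = u at *
  generalize (⌊α * (b + 1 + s : ℕ)⌋₊ : ℝ) = v at *
  push_cast at e1 e2 e3 e4
  rw [abs_le]
  constructor <;> linarith

end Beatty

end MinimalBasis

theorem erdos_nathanson_minimal_basis_order_two_density_alpha (α : ℝ)
    (hα0 : 0 < α) (hα1 : α ≤ 1 / 2) :
    ∃ A : Set ℕ, IsMinimalAsymptoticBasisOfOrder A 2 ∧
      Tendsto (fun n : ℕ => (countingFn A n : ℝ) / (n : ℝ)) atTop (nhds α) := by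
  open MinimalBasis in
  obtain ⟨g, hg⟩ := exists_nat_gt (1 / α)
  have hg1 : 1 ≤ α * g := by
    rw [div_lt_iff₀' hα0] at hg
    exact hg.le
  have hg0 : 0 < g := by
    rcases Nat.eq_zero_or_pos g with rfl | h
    · norm_num at hg1
    · exact h
  exact ⟨basis (jumps α) g,
    isMinimal_basis hg0 (fun _ => succ_notMem_jumps hα0.le hα1) (exists_mem_jumps hα0 hg1),
    tendsto_countingFn_basis hg0 hα0.le (by linarith) zero_le_one
      (hasDiscrepancy_jumps hα0.le (by linarith) 0)
      (hasDiscrepancy_jumps hα0.le (by linarith) 1)⟩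
end

section
/- (Erdős–Nathanson) There exists an asymptotic basis A of order 2 with the following property: for every subset S ⊆ A, the set A \ S is an asymptotic basis of order 2 if and only if S is finite. In particular, A contains no minimal asymptotic basis of order 2. -/
open Pointwise Filter

/-- The block at scale `c`: an interval together with two isolated points. -/
def scaleBlock (c : ℕ) : Set ℕ :=
  {a | (32 * c ≤ a ∧ a ≤ 81 * c) ∨ a = 130 * c + 1 ∨ a = 179 * c + 2}

/-- The union of the blocks at the scales `8 ^ j`. -/
def blockBasis : Set ℕ := {a | ∃ j : ℕ, a ∈ scaleBlock (8 ^ j)}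

theorem isAsymptoticBasisOfOrder_two_iff {A : Set ℕ} :
    IsAsymptoticBasisOfOrder A 2 ↔ ∃ N, ∀ n ≥ N, ∃ x ∈ A, ∃ y ∈ A, x + y = n := by
  simp only [IsAsymptoticBasisOfOrder, eventually_atTop]
  refine exists_congr fun N => forall₂_congr fun n _ => ⟨?_, ?_⟩
  · rintro ⟨c, hc, hn⟩
    exact ⟨c 0, hc 0, c 1, hc 1, by simpa [Fin.sum_univ_two] using hn⟩
  · rintro ⟨x, hx, y, hy, hn⟩
    refine ⟨![x, y], fun i => ?_, by simpa [Fin.sum_univ_two] using hn⟩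
    fin_cases i <;> simpa

theorem mem_scaleBlock_or_far_of_mem_blockBasis {x : ℕ} (hx : x ∈ blockBasis) (j : ℕ) :
    256 * 8 ^ j ≤ x ∨ x ∈ scaleBlock (8 ^ j) ∨ 8 * x ≤ 179 * 8 ^ j + 16 := by
  obtain ⟨i, hi⟩ := hx
  rcases lt_trichotomy i j with h | rfl | h
  · have : 8 ^ (i + 1) ≤ 8 ^ j := Nat.pow_le_pow_right (by norm_num) h
    have : 0 < 8 ^ i := by positivity
    simp only [scaleBlock, Set.mem_ofPred_eq] at hi
    rw [pow_succ] at *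
    omega
  · exact Or.inr (Or.inl hi)
  · have : 8 ^ (j + 1) ≤ 8 ^ i := Nat.pow_le_pow_right (by norm_num) h
    simp only [scaleBlock, Set.mem_ofPred_eq] at hi
    rw [pow_succ] at *
    omega

theorem exists_add_eq_of_mem_Icc {f n : ℕ} (hf : 0 < f) (h₁ : 2080 * f + 3 ≤ n)
    (h₂ : n ≤ 16640 * f + 2) :
    ∃ x ∈ scaleBlock f ∪ scaleBlock (64 * f), ∃ y ∈ scaleBlock f ∪ scaleBlock (64 * f),
      32 * f ≤ x ∧ 32 * f ≤ y ∧ x + y = n := by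
  simp only [scaleBlock, Set.mem_union, Set.mem_ofPred_eq]
  by_cases h : n ≤ 5216 * f + 3
  · exact ⟨32 * f + 3, by omega, n - (32 * f + 3), by omega, by omega⟩
  by_cases h : n ≤ 10368 * f
  · exact ⟨n / 2, by omega, n - n / 2, by omega, by omega⟩
  by_cases h : n ≤ 13504 * f + 1
  · exact ⟨8320 * f + 1, by omega, n - (8320 * f + 1), by omega, by omega⟩
  · exact ⟨11456 * f + 2, by omega, n - (11456 * f + 2), by omega, by omega⟩

theorem exists_large_add_eq (B : ℕ) :
    ∃ N, ∀ n ≥ N, ∃ x ∈ blockBasis, ∃ y ∈ blockBasis, B < x ∧ B < y ∧ x + y = n := by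
  refine ⟨2080 * 8 ^ B + 3, fun n hn => ?_⟩
  have hB : B < 8 ^ B := Nat.lt_pow_self (by norm_num)
  have hex : ∃ k, n < 2080 * 8 ^ k + 3 :=
    ⟨n, by have : n < 8 ^ n := Nat.lt_pow_self (by norm_num)
           omega⟩
  obtain ⟨j, hj₁, hj₂⟩ : ∃ j, 2080 * 8 ^ j + 3 ≤ n ∧ n < 2080 * 8 ^ (j + 1) + 3 := by
    classical
    have hpos : Nat.find hex ≠ 0 := fun h => by
      have h0 := Nat.find_spec hex
      rw [h] at h0
      have : 1 ≤ 8 ^ B := Nat.one_le_pow _ _ (by norm_num)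
      omega
    obtain ⟨j, hj⟩ := Nat.exists_eq_succ_of_ne_zero hpos
    have hspec := Nat.find_spec hex
    rw [hj] at hspec
    exact ⟨j, not_lt.1 (Nat.find_min hex (hj ▸ Nat.lt_succ_self j)), hspec⟩
  have hBj : B ≤ j := by
    by_contra! h
    have : 8 ^ (j + 1) ≤ 8 ^ B := Nat.pow_le_pow_right (by norm_num) h
    omega
  have hle : 8 ^ B ≤ 8 ^ j := Nat.pow_le_pow_right (by norm_num) hBj
  have hsub : scaleBlock (8 ^ j) ∪ scaleBlock (64 * 8 ^ j) ⊆ blockBasis := by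
    rintro a (ha | ha)
    · exact ⟨j, ha⟩
    · exact ⟨j + 2, by rwa [pow_add, mul_comm]⟩
  rw [pow_succ] at hj₂
  obtain ⟨x, hx, y, hy, hx', hy', hn⟩ :=
    exists_add_eq_of_mem_Icc (f := 8 ^ j) (by positivity) hj₁ (by omega)
  exact ⟨x, hsub hx, y, hsub hy, by omega, by omega, hn⟩

theorem exists_sum_forcing_mem {a : ℕ} (ha : a ∈ blockBasis) :
    ∃ b ∈ blockBasis, ∀ x ∈ blockBasis, ∀ y ∈ blockBasis, x + y = a + b → x = a ∨ y = a := by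
  obtain ⟨j, hj⟩ := ha
  have far := fun {x} (hx : x ∈ blockBasis) => mem_scaleBlock_or_far_of_mem_blockBasis hx j
  have hmem : ∀ {b}, b ∈ scaleBlock (8 ^ j) → b ∈ blockBasis := fun hb => ⟨j, hb⟩
  have hc : 0 < 8 ^ j := by positivity
  generalize 8 ^ j = c at *
  simp only [scaleBlock, Set.mem_ofPred_eq] at hj hmem far
  by_cases hO : a = 130 * c + 1 ∨ a = 179 * c + 2
  · refine ⟨32 * c, hmem (by omega), fun x hx y hy h => ?_⟩
    have := far hx
    have := far hy
    omega
  by_cases hw : 49 * c + 1 ≤ a ∧ a - (49 * c + 1) ∈ blockBasis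
  · refine ⟨179 * c + 2, hmem (by omega), fun x hx y hy h => ?_⟩
    have := far hx
    have := far hy
    have := far hw.2
    omega
  · refine ⟨130 * c + 1, hmem (by omega), fun x hx y hy h => ?_⟩
    have hx' : x ≠ a - (49 * c + 1) ∨ a < 49 * c + 1 := by
      by_contra! hcon
      exact hw ⟨hcon.2, hcon.1 ▸ hx⟩
    have hy' : y ≠ a - (49 * c + 1) ∨ a < 49 * c + 1 := by
      by_contra! hcon
      exact hw ⟨hcon.2, hcon.1 ▸ hy⟩
    have := far hx
    have := far hy
    omega

theorem isAsymptoticBasisOfOrder_blockBasis_diff_iff {S : Set ℕ} (hS : S ⊆ blockBasis) :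
    IsAsymptoticBasisOfOrder (blockBasis \ S) 2 ↔ S.Finite := by
  rw [isAsymptoticBasisOfOrder_two_iff]
  constructor
  · rintro ⟨N, hN⟩
    by_contra hinf
    obtain ⟨s, hs, hNs⟩ := Set.Infinite.exists_gt hinf N
    obtain ⟨b, -, hb⟩ := exists_sum_forcing_mem (hS hs)
    obtain ⟨x, hx, y, hy, hxy⟩ := hN (s + b) (by omega)
    rcases hb x hx.1 y hy.1 hxy with rfl | rfl
    · exact hx.2 hs
    · exact hy.2 hs
  · intro hfin
    obtain ⟨B, hB⟩ := hfin.bddAbove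
    obtain ⟨N, hN⟩ := exists_large_add_eq B
    refine ⟨N, fun n hn => ?_⟩
    obtain ⟨x, hx, y, hy, hBx, hBy, hxy⟩ := hN n hn
    exact ⟨x, ⟨hx, fun h => hBx.not_ge (hB h)⟩, y, ⟨hy, fun h => hBy.not_ge (hB h)⟩, hxy⟩

theorem erdos_nathanson_basis_without_minimal_subbasis :
    ∃ A : Set ℕ, IsAsymptoticBasisOfOrder A 2 ∧
      (∀ S : Set ℕ, S ⊆ A →
        (IsAsymptoticBasisOfOrder (A \ S) 2 ↔ S.Finite)) ∧
      ∀ B : Set ℕ, B ⊆ A → ¬ IsMinimalAsymptoticBasisOfOrder B 2 := by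
  refine ⟨blockBasis, ?_, fun S hS => isAsymptoticBasisOfOrder_blockBasis_diff_iff hS, ?_⟩
  · simpa using (isAsymptoticBasisOfOrder_blockBasis_diff_iff (Set.empty_subset _)).2 Set.finite_empty
  · rintro B hB ⟨hbasis, hmin⟩
    have hfin : (blockBasis \ B).Finite := by
      rw [← isAsymptoticBasisOfOrder_blockBasis_diff_iff Set.sdiff_subset]
      rwa [Set.sdiff_sdiff_cancel_left hB]
    obtain ⟨N, hN⟩ := isAsymptoticBasisOfOrder_two_iff.1 hbasis
    obtain ⟨b, hb, -⟩ := hN N le_rfl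
    refine hmin (B \ {b}) (Set.sdiff_singleton_ssubset.2 hb) ?_
    have := (isAsymptoticBasisOfOrder_blockBasis_diff_iff
      (Set.union_subset Set.sdiff_subset (Set.singleton_subset_iff.2 (hB hb)))).2
      (hfin.union (Set.finite_singleton b))
    rwa [← Set.sdiff_sdiff, Set.sdiff_sdiff_cancel_left hB] at this
end
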